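/- Let Γ be a finite connected k-regular simple graph (k ≥ 2) of diameter at most d, with adjacency matrix A over ℝ. Define matrices by the recursion G_{k,0}(A) = I, G_{k,1}(A) = A + I, G_{k,i+1}(A) = A·G_{k,i}(A) − (k−1)·G_{k,i−1}(A). Then every entry of G_{k,d}(A) is at least 1; equivalently, G_{k,d}(A) = J_n + B where J_n is the all-ones matrix and B is a matrix with nonnegative entries. -/

import Mathlib

/-- The matrix polynomials `G_{k,i}(A)` defined by `G_{k,0}(A) = I`, `G_{k,1}(A) = A + I`,
`G_{k,i+1}(A) = A·G_{k,i}(A) − (k−1)·G_{k,i−1}(A)`. -/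
def Gmat {V : Type*} [Fintype V] [DecidableEq V] (k : ℕ) (A : Matrix V V ℝ) :
    ℕ → Matrix V V ℝ
  | 0 => 1
  | 1 => A + 1
  | (i + 2) => A * Gmat k A (i + 1) - ((k : ℝ) - 1) • Gmat k A i

/-- Number of non-backtracking walks of length `n+1` from `u` to `v` with first step to `w`. -/
def nbP {V : Type*} [Fintype V] [DecidableEq V] (G : SimpleGraph V) [DecidableRel G.Adj] :
    ℕ → V → V → V → ℝ
  | 0, _, w, v => if w = v then 1 else 0
  | (n + 1), u, w, v => ∑ x ∈ (G.neighborFinset w).erase u, nbP G n w x v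

/-- Number of non-backtracking walks of length `n+1`. -/
def nbF {V : Type*} [Fintype V] [DecidableEq V] (G : SimpleGraph V) [DecidableRel G.Adj]
    (n : ℕ) : Matrix V V ℝ := fun u v => ∑ w ∈ G.neighborFinset u, nbP G n u w v

section nb
variable {V : Type*} [Fintype V] [DecidableEq V] (G : SimpleGraph V) [DecidableRel G.Adj]

theorem nbP_nonneg (n : ℕ) : ∀ u w v, 0 ≤ nbP G n u w v := by
  induction n with
  | zero => intro u w v; simp only [nbP]; split_ifs <;> norm_num
  | succ n ih => intro u w v; exact Finset.sum_nonneg fun x _ => ih _ _ _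

theorem nbF_nonneg (n : ℕ) (u v : V) : 0 ≤ nbF G n u v :=
  Finset.sum_nonneg fun _ _ => nbP_nonneg G n _ _ _

theorem nbF_zero : nbF G 0 = G.adjMatrix ℝ := by
  ext u v
  simp [nbF, nbP, SimpleGraph.adjMatrix_apply]

theorem adj_mul_nbF (n : ℕ) (u v : V) :
    (G.adjMatrix ℝ * nbF G n) u v
      = nbF G (n + 1) u v + ∑ w ∈ G.neighborFinset u, nbP G n w u v := by
  rw [SimpleGraph.adjMatrix_mul_apply]
  simp only [nbF]
  rw [← Finset.sum_add_distrib]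
  refine Finset.sum_congr rfl fun w hw => ?_
  simp only [nbP]
  rw [Finset.sum_erase_add]
  rw [SimpleGraph.mem_neighborFinset] at hw ⊢
  exact hw.symm

theorem nbF_rec (k : ℕ) (hreg : G.IsRegularOfDegree k) (n : ℕ) :
    G.adjMatrix ℝ * nbF G (n + 1) = nbF G (n + 2) + ((k : ℝ) - 1) • nbF G n := by
  ext u v
  rw [adj_mul_nbF, Matrix.add_apply, Matrix.smul_apply]
  congr 1
  have h : ∀ w ∈ G.neighborFinset u, nbP G (n + 1) w u v = nbF G n u v - nbP G n u w v := by
    intro w hw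
    simp only [nbP, nbF]
    rw [← Finset.sum_erase_add _ _ hw]; ring
  rw [Finset.sum_congr rfl h, Finset.sum_sub_distrib, Finset.sum_const,
    SimpleGraph.card_neighborFinset_eq_degree, hreg u]
  simp only [nbF, nsmul_eq_mul, smul_eq_mul]
  ring

theorem nbF_one (k : ℕ) (hreg : G.IsRegularOfDegree k) :
    G.adjMatrix ℝ * nbF G 0 = nbF G 1 + (k : ℝ) • (1 : Matrix V V ℝ) := by
  ext u v
  rw [adj_mul_nbF, Matrix.add_apply, Matrix.smul_apply]
  congr 1
  simp only [nbP]
  rw [Finset.sum_const, SimpleGraph.card_neighborFinset_eq_degree, hreg u]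
  simp [Matrix.one_apply]

theorem Gmat_step (k : ℕ) (hreg : G.IsRegularOfDegree k) (n : ℕ) :
    Gmat k (G.adjMatrix ℝ) (n + 1) = Gmat k (G.adjMatrix ℝ) n + nbF G n := by
  induction n using Nat.twoStepInduction with
  | zero => simp [Gmat, nbF_zero, add_comm]
  | one =>
    have h := nbF_one G k hreg
    have h2 : nbF G 1 = G.adjMatrix ℝ * G.adjMatrix ℝ - (k : ℝ) • (1 : Matrix V V ℝ) := by
      rw [nbF_zero] at h; rw [h]; abel
    rw [h2]
    simp only [Gmat, mul_add, sub_smul, one_smul, mul_one]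
    abel
  | more n ih1 ih2 =>
    have e1 : Gmat k (G.adjMatrix ℝ) (n + 1 + 1 + 1) = G.adjMatrix ℝ *
      Gmat k (G.adjMatrix ℝ) (n + 1 + 1) - ((k : ℝ) - 1) • Gmat k (G.adjMatrix ℝ) (n + 1) := rfl
    have e2 : Gmat k (G.adjMatrix ℝ) (n + 1 + 1) = G.adjMatrix ℝ *
      Gmat k (G.adjMatrix ℝ) (n + 1) - ((k : ℝ) - 1) • Gmat k (G.adjMatrix ℝ) n := rfl
    change Gmat k (G.adjMatrix ℝ) (n + 1 + 1 + 1) = Gmat k (G.adjMatrix ℝ) (n + 1 + 1) + _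
    rw [e1, ih2, mul_add, nbF_rec G k hreg n, ← ih2, e2, ih1, smul_add]
    abel

theorem exists_step (hconn : G.Connected) (n : ℕ) (u v : V) (h : G.dist u v = n + 1) :
    ∃ w, G.Adj u w ∧ G.dist w v = n := by
  obtain ⟨p, hp⟩ := hconn.exists_walk_length_eq_dist u v
  cases p with
  | nil => simp at h
  | @cons _ w _ hw q =>
    refine ⟨w, hw, ?_⟩
    have h1 := SimpleGraph.dist_le q
    have h2 := hconn.dist_triangle (u := u) (v := w) (w := v)
    have h3 : G.dist u w = 1 := SimpleGraph.dist_eq_one_iff_adj.mpr hw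
    rw [SimpleGraph.Walk.length_cons] at hp
    omega

theorem nbP_pos (hconn : G.Connected) (n : ℕ) : ∀ u w v, G.dist w v = n →
    G.dist u v = n + 1 → 1 ≤ nbP G n u w v := by
  induction n with
  | zero =>
    intro u w v h _
    rw [hconn.dist_eq_zero_iff] at h
    simp [nbP, h]
  | succ n ih =>
    intro u w v h hu
    obtain ⟨x, hx, hd⟩ := exists_step G hconn n w v h
    simp only [nbP]
    refine (ih w x v hd h).trans
      (Finset.single_le_sum (f := fun x => nbP G n w x v) (fun y _ => nbP_nonneg G n w y v) ?_)
    rw [Finset.mem_erase, SimpleGraph.mem_neighborFinset]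
    refine ⟨?_, hx⟩
    rintro rfl
    omega

theorem Gmat_pos (hconn : G.Connected) (k : ℕ) (hreg : G.IsRegularOfDegree k) (n : ℕ) (u v : V) :
    0 ≤ Gmat k (G.adjMatrix ℝ) n u v ∧
      (G.dist u v ≤ n → 1 ≤ Gmat k (G.adjMatrix ℝ) n u v) := by
  induction n with
  | zero =>
    simp only [Gmat, Matrix.one_apply]
    refine ⟨by split_ifs <;> norm_num, fun h => ?_⟩
    rw [Nat.le_zero, hconn.dist_eq_zero_iff] at h
    simp [h]
  | succ n ih =>
    rw [Gmat_step G k hreg, Matrix.add_apply]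
    have h0 := nbF_nonneg G n u v
    refine ⟨add_nonneg ih.1 h0, fun h => ?_⟩
    rcases Nat.le_succ_iff.mp h with h | h
    · linarith [ih.2 h]
    · obtain ⟨w, hw, hd⟩ := exists_step G hconn n u v h
      have h1 := nbP_pos G hconn n u w v hd h
      have h2 : nbP G n u w v ≤ nbF G n u v :=
        Finset.single_le_sum (f := fun x => nbP G n u x v) (fun y _ => nbP_nonneg G n u y v)
          (by rwa [SimpleGraph.mem_neighborFinset])
      linarith [ih.1]

end nb


/-- For a finite connected `k`-regular graph (`k ≥ 2`) of diameter at most `d`, every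
entry of `G_{k,d}(A)` is at least `1`, where `A` is the adjacency matrix. -/
theorem stmt_7 (k d : ℕ) (hk : 2 ≤ k)
    (V : Type*) [Fintype V] [DecidableEq V] (G : SimpleGraph V) [DecidableRel G.Adj]
    (hconn : G.Connected) (hreg : G.IsRegularOfDegree k)
    (hdiam : ∀ u v : V, G.dist u v ≤ d) :
    ∀ i j : V, 1 ≤ Gmat k (SimpleGraph.adjMatrix ℝ G) d i j := by
  exact fun i j => (Gmat_pos G hconn k hreg d i j).2 (hdiam i j)
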